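/- Let Ω ⊂ ℝ^N (N ≥ 3) be a bounded open set with C² boundary, a ≥ 2, Φ : Ω → (0,∞) Borel measurable, and G : {(x,y) ∈ Ω × Ω : x ≠ y} → (0,∞) Borel measurable. Assume there exist c₀ ≥ 1 and β₁ > 0 such that for every β ∈ (0,β₁), every x ∈ Σ_β and every y ∈ Ω with 0 < |x−y| < aβ: c₀⁻¹ |x−y|^{2−N} Φ(y) ≤ Φ(x) G(x,y) ≤ c₀ |x−y|^{2−N} Φ(y). Then there exist c ≥ 1 and β₂ ∈ (0,β₁] such that for every positive Borel measure τ on Ω with ∫_Ω Φ dτ < ∞ and every β ∈ (0,β₂), setting I₁(β) := β⁻¹ ∫_{Σ_β} Φ(x) (∫_Ω G(x,y) 𝟙_{|x−y| < aβ} dτ(y)) dH^{N−1}(x), one has c⁻¹ ∫_{Ω_{aβ/2}} Φ dτ ≤ I₁(β) ≤ c ∫_Ω Φ dτ. -/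

import Mathlib

open MeasureTheory Metric Set

/-- `Ω` has `C²` boundary: near each boundary point, `Ω` coincides with the strict
sublevel set of a `C²` function with nonvanishing derivative. -/
def HasC2Boundary {N : ℕ} (Ω : Set (EuclideanSpace ℝ (Fin N))) : Prop :=
  ∀ p ∈ frontier Ω, ∃ (U : Set (EuclideanSpace ℝ (Fin N)))
    (f : EuclideanSpace ℝ (Fin N) → ℝ),
    IsOpen U ∧ p ∈ U ∧ ContDiffOn ℝ 2 f U ∧ (∀ x ∈ U, fderiv ℝ f x ≠ 0) ∧
    Ω ∩ U = {x ∈ U | f x < 0}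

/-!
Since `Φ(x) G(x, y)` is comparable to `|x - y| ^ (2 - N) Φ(y)`, Tonelli reduces both bounds to
showing that, for fixed `y`, the integral of `|x - y| ^ (2 - N)` over `Σ_β ∩ B(y, a β)` is at most
a constant times `β`, and at least a constant times `β` when `y` lies within `a β / 2` of the
boundary.

The only feature of a `C²` (indeed `C¹`) boundary that matters is the uniform interior cone
condition: `Ω` contains a cone with vertex at each of its points near a given boundary point, with
a common axis `e`. The distance to the boundary then increases along that cone, so `Σ_β` is locally
a Lipschitz graph over the hyperplane `e ^ ⊥`, with constants independent of `β`. Projecting along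
`e` bounds `H^(N-1)(Σ_β ∩ B(y, r))` above by a multiple of `r ^ (N-1)`, and below by such a multiple
when `r = a β` and `y` is in the strip, because `Σ_β` then contains a point of `B(y, a β)` at
depth comparable to `β`. The upper bound follows by summing over dyadic shells around `y`.
-/

open Filter Pointwise Topology
open scoped InnerProductSpace

section Frontier

variable {X : Type*} [PseudoMetricSpace X] {Ω : Set X}

theorem infDist_frontier_pos (hΩ : IsOpen Ω) (hne : (frontier Ω).Nonempty) {x : X} (hx : x ∈ Ω) :
    0 < infDist x (frontier Ω) :=
  (isClosed_frontier.notMem_iff_infDist_pos hne).1 (disjoint_right.1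
    (disjoint_frontier_iff_isOpen.2 hΩ) hx)

theorem le_infDist_frontier_of_ball_subset (hΩ : IsOpen Ω) (hne : (frontier Ω).Nonempty) {x : X}
    {r : ℝ} (h : ball x r ⊆ Ω) : r ≤ infDist x (frontier Ω) :=
  (le_infDist hne).2 fun _ hy => not_lt.1 fun hlt =>
    disjoint_left.1 (disjoint_frontier_iff_isOpen.2 hΩ) hy (h (mem_ball'.2 hlt))

theorem ball_infDist_frontier_subset {E : Type*} [NormedAddCommGroup E] [NormedSpace ℝ E]
    {Ω : Set E} (hΩ : IsOpen Ω) {x : E} (hx : x ∈ Ω) : ball x (infDist x (frontier Ω)) ⊆ Ω := by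
  rcases (infDist_nonneg (x := x) (s := frontier Ω)).eq_or_lt' with h0 | hpos
  · rw [h0, ball_zero]
    exact empty_subset _
  · refine (convex_ball x _).isPreconnected.subset_of_closure_inter_subset hΩ
      ⟨x, mem_ball_self hpos, hx⟩ fun z ⟨hzΩ, hzx⟩ => by_contra fun hz => ?_
    exact disjoint_left.1 disjoint_ball_infDist hzx (hΩ.frontier_eq ▸ ⟨hzΩ, hz⟩)

/-- The surface `Σ_β` of points of `Ω` at distance `β` from the boundary. -/
def distLevel (Ω : Set X) (β : ℝ) : Set X := {x ∈ Ω | infDist x (frontier Ω) = β}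

theorem measurableSet_distLevel [MeasurableSpace X] [OpensMeasurableSpace X] (hΩ : IsOpen Ω)
    (β : ℝ) : MeasurableSet (distLevel Ω β) :=
  hΩ.measurableSet.inter (measurableSet_eq_fun measurable_infDist measurable_const)

theorem exists_mem_distLevel_of_le_infDist {E : Type*} [NormedAddCommGroup E] [NormedSpace ℝ E]
    [ProperSpace E] {Ω : Set E} (hΩ : IsOpen Ω) (hne : (frontier Ω).Nonempty) {y : E} (hy : y ∈ Ω)
    {β : ℝ} (hβ : 0 < β) (hβy : β ≤ infDist y (frontier Ω)) :
    ∃ x ∈ distLevel Ω β, dist x y = infDist y (frontier Ω) - β := by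
  obtain ⟨q, hq, hqy⟩ := isClosed_frontier.exists_infDist_eq_dist hne y
  have hd : 0 < dist y q := hqy ▸ hβ.trans_le hβy
  rw [hqy] at hβy ⊢
  set x := AffineMap.lineMap q y (β / dist y q)
  have hxq : dist x q = β := by
    rw [dist_lineMap_left, Real.norm_of_nonneg (by positivity), dist_comm q y,
      div_mul_cancel₀ _ hd.ne']
  have hxy : dist x y = dist y q - β := by
    rw [dist_lineMap_right, Real.norm_of_nonneg (sub_nonneg.2 ((div_le_one hd).2 hβy)),
      dist_comm q y, sub_mul, one_mul, div_mul_cancel₀ _ hd.ne']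
  refine ⟨x, ⟨ball_infDist_frontier_subset hΩ hy ?_, le_antisymm ?_ ?_⟩, hxy⟩
  · rw [mem_ball, hxy, hqy]
    exact sub_lt_self _ hβ
  · exact hxq ▸ infDist_le_dist_of_mem hq
  · have := infDist_le_infDist_add_dist (s := frontier Ω) (x := y) (y := x)
    rw [dist_comm, hxy, hqy] at this
    linarith

end Frontier

section InteriorCone

variable {E : Type*} [NormedAddCommGroup E] [InnerProductSpace ℝ E] {Ω : Set E} {p e : E}
  {κ ρ : ℝ}

/-- The uniform interior cone condition near `p`: the truncated cone with axis `e` and aperture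
`{v | κ * ‖v‖ ≤ ⟪e, v⟫}`, translated to any point of `Ω` close to `p`, is contained in `Ω`. -/
def InteriorConeAt (Ω : Set E) (p e : E) (κ ρ : ℝ) : Prop :=
  ∀ z ∈ Ω, dist z p < ρ → ∀ v : E, ‖v‖ < ρ → κ * ‖v‖ ≤ ⟪e, v⟫_ℝ → z + v ∈ Ω

/-- Every boundary point has an interior cone of aperture `κ`; for open `Ω` this says that `Ω` is
locally the region above a Lipschitz graph, with Lipschitz constant `κ / √(1 - κ ^ 2)`. -/
def HasInteriorCones (Ω : Set E) (κ : ℝ) : Prop :=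
  ∀ p ∈ frontier Ω, ∃ e : E, ‖e‖ = 1 ∧ ∃ ρ > 0, InteriorConeAt Ω p e κ ρ

theorem InteriorConeAt.recenter (h : InteriorConeAt Ω p e κ ρ) {q : E} {r : ℝ}
    (hqr : dist q p + r ≤ ρ) : InteriorConeAt Ω q e κ r := fun z hz hzq v hv =>
  h z hz (by linarith [dist_triangle z q p]) v (by linarith [dist_nonneg (x := q) (y := p)])

theorem HasInteriorCones.exists_uniform (h : HasInteriorCones Ω κ)
    (hK : IsCompact (frontier Ω)) :
    ∃ ρ > 0, ∀ q ∈ frontier Ω, ∃ e : E, ‖e‖ = 1 ∧ InteriorConeAt Ω q e κ ρ := by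
  have hev : ∀ᶠ r : ℝ in 𝓝 0, ∀ q ∈ frontier Ω, ∃ e : E, ‖e‖ = 1 ∧ InteriorConeAt Ω q e κ r := by
    refine hK.eventually_forall_of_forall_eventually fun p hp => ?_
    obtain ⟨e, he, ρ, hρ, hcone⟩ := h p hp
    have hlim : Tendsto (fun z : ℝ × E => dist z.2 p + z.1) (𝓝 (0, p)) (𝓝 0) :=
      Continuous.tendsto' (by fun_prop) _ _ (by simp)
    filter_upwards [hlim.eventually_le_const hρ] with z hz
    exact ⟨e, he, hcone.recenter hz⟩
  obtain ⟨ρ, hρ, hρ0⟩ := ((hev.filter_mono nhdsWithin_le_nhds).and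
    (self_mem_nhdsWithin (s := Ioi (0 : ℝ)))).exists
  exact ⟨ρ, hρ0, hρ⟩

theorem InteriorConeAt.infDist_add_le (h : InteriorConeAt Ω p e κ ρ) (hΩ : IsOpen Ω)
    (hp : p ∈ frontier Ω) (he : ‖e‖ = 1) (hκ : 0 ≤ κ) {x v : E} (hx : x ∈ Ω)
    (hxp : dist x p < ρ / 2) (hv : ‖v‖ < ρ / 2) (hve : κ * ‖v‖ ≤ ⟪e, v⟫_ℝ) :
    infDist x (frontier Ω) + (⟪e, v⟫_ℝ - κ * ‖v‖) / (1 + κ) ≤ infDist (x + v) (frontier Ω) := by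
  have hinner (w : E) : |⟪e, w⟫_ℝ| ≤ ‖w‖ := by simpa [he] using abs_real_inner_le_norm e w
  have hd := infDist_frontier_pos hΩ ⟨p, hp⟩ hx
  have hdp := infDist_le_dist_of_mem (x := x) hp
  set d := infDist x (frontier Ω)
  set s := (⟪e, v⟫_ℝ - κ * ‖v‖) / (1 + κ)
  have hs : 0 ≤ s := div_nonneg (sub_nonneg.2 hve) (by linarith)
  have hsv : s * (1 + κ) = ⟪e, v⟫_ℝ - κ * ‖v‖ := div_mul_cancel₀ _ (by linarith)
  have hs_le : s ≤ ‖v‖ := by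
    nlinarith [(abs_le.1 (hinner v)).2, mul_nonneg hκ hs, mul_nonneg hκ (norm_nonneg v)]
  refine le_infDist_frontier_of_ball_subset hΩ ⟨p, hp⟩ ?_
  -- Translating `ball x d ⊆ Ω` by the vectors of `closedBall v s`, which all lie in the cone,
  -- covers `ball (x + v) (d + s)`.
  rw [← ball_add_closedBall hd hs]
  rintro _ ⟨z, hz, u, hu, rfl⟩
  rw [mem_closedBall, dist_eq_norm] at hu
  have hu_norm : ‖u‖ ≤ ‖v‖ + s := (norm_le_norm_add_norm_sub' u v).trans (by gcongr)
  refine h z (ball_infDist_frontier_subset hΩ hx hz) ?_ u (by linarith) ?_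
  · linarith [dist_triangle z x p, mem_ball.1 hz]
  · have hu_inner : ⟪e, v⟫_ℝ - s ≤ ⟪e, u⟫_ℝ := by
      have := (abs_le.1 (hinner (u - v))).1
      rw [inner_sub_right] at this
      linarith
    linarith [mul_le_mul_of_nonneg_left hu_norm hκ]

theorem InteriorConeAt.infDist_le_infDist_add (h : InteriorConeAt Ω p e κ ρ) (hΩ : IsOpen Ω)
    (hp : p ∈ frontier Ω) (he : ‖e‖ = 1) (hκ : 0 ≤ κ) {x v : E} (hx : x ∈ Ω)
    (hxp : dist x p < ρ / 2) (hv : ‖v‖ < ρ / 2) (hve : κ * ‖v‖ ≤ ⟪e, v⟫_ℝ) :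
    infDist x (frontier Ω) ≤ infDist (x + v) (frontier Ω) :=
  (le_add_of_nonneg_right (div_nonneg (sub_nonneg.2 hve) (by linarith))).trans
    (h.infDist_add_le hΩ hp he hκ hx hxp hv hve)

theorem InteriorConeAt.abs_inner_sub_le_of_mem_distLevel (h : InteriorConeAt Ω p e κ ρ)
    (hΩ : IsOpen Ω) (hp : p ∈ frontier Ω) (he : ‖e‖ = 1) (hκ : 0 ≤ κ) {β : ℝ} {x y : E}
    (hx : x ∈ distLevel Ω β) (hy : y ∈ distLevel Ω β) (hxp : dist x p < ρ / 4)
    (hyp : dist y p < ρ / 4) :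
    |⟪e, x - y⟫_ℝ| ≤ κ * ‖x - y‖ := by
  have key {x y : E} (hx : x ∈ distLevel Ω β) (hy : y ∈ distLevel Ω β) (hxp : dist x p < ρ / 4)
      (hyp : dist y p < ρ / 4) : ⟪e, x - y⟫_ℝ ≤ κ * ‖x - y‖ := by
    by_contra! hlt
    have hxy : ‖x - y‖ < ρ / 2 := by
      rw [← dist_eq_norm]
      linarith [dist_triangle_right x y p]
    have hle := h.infDist_add_le hΩ hp he hκ hy.1 (by linarith [dist_nonneg (x := y) (y := p)])
      hxy hlt.le
    rw [add_sub_cancel, hx.2, hy.2] at hle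
    have : 0 < (⟪e, x - y⟫_ℝ - κ * ‖x - y‖) / (1 + κ) :=
      div_pos (sub_pos.2 hlt) (by linarith)
    linarith
  refine abs_le'.2 ⟨key hx hy hxp hyp, ?_⟩
  rw [← inner_neg_right, neg_sub, norm_sub_rev]
  exact key hy hx hyp hxp

theorem InteriorConeAt.exists_mem_distLevel_of_infDist_le (h : InteriorConeAt Ω p e κ ρ)
    (hΩ : IsOpen Ω) (hp : p ∈ frontier Ω) (he : ‖e‖ = 1) (hκ : κ ∈ Ico (0 : ℝ) 1) {β : ℝ} {y : E}
    (hy : y ∈ Ω) (hyβ : infDist y (frontier Ω) ≤ β) (hyp : dist y p < ρ / 2)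
    (hβρ : (1 + κ) / (1 - κ) * β < ρ / 2) :
    ∃ x ∈ distLevel Ω β, dist x y ≤ (1 + κ) / (1 - κ) * β := by
  have h1 : 0 < 1 - κ := by linarith [hκ.2]
  have h2 : 0 < 1 + κ := by linarith [hκ.1]
  have hδ : 0 ≤ infDist y (frontier Ω) := infDist_nonneg
  set T := (1 + κ) / (1 - κ) * β
  have hT : 0 ≤ T := mul_nonneg (by positivity) (hδ.trans hyβ)
  have hnorm {t : ℝ} (ht : 0 ≤ t) : ‖t • e‖ = t := by
    rw [norm_smul, he, mul_one, Real.norm_of_nonneg ht]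
  have hinner (t : ℝ) : ⟪e, t • e⟫_ℝ = t := by
    rw [inner_smul_right, real_inner_self_eq_norm_sq, he, one_pow, mul_one]
  have hcone {t : ℝ} (ht : 0 ≤ t) : κ * ‖t • e‖ ≤ ⟪e, t • e⟫_ℝ := by
    rw [hnorm ht, hinner]
    exact mul_le_of_le_one_left ht hκ.2.le
  have hend : β ≤ infDist (y + T • e) (frontier Ω) := by
    have hle := h.infDist_add_le hΩ hp he hκ.1 hy hyp ((hnorm hT).trans_lt hβρ) (hcone hT)
    have hgain : (T - κ * T) / (1 + κ) = β := by
      simp only [T]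
      field_simp
    rw [hnorm hT, hinner, hgain] at hle
    linarith
  have hcont : Continuous fun t : ℝ => infDist (y + t • e) (frontier Ω) :=
    (continuous_infDist_pt _).comp (by fun_prop)
  obtain ⟨t, ⟨ht0, htT⟩, ht⟩ := intermediate_value_Icc hT hcont.continuousOn
    (show β ∈ Icc _ _ from ⟨by simpa only [zero_smul, add_zero], hend⟩)
  refine ⟨y + t • e, ⟨h y hy (by linarith) _ ?_ (hcone ht0), ht⟩, ?_⟩
  · rw [hnorm ht0]
    linarith
  · rwa [dist_self_add_left, hnorm ht0]

theorem InteriorConeAt.exists_mem_distLevel_dist_le [ProperSpace E]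
    (h : InteriorConeAt Ω p e κ ρ) (hΩ : IsOpen Ω) (hp : p ∈ frontier Ω) (he : ‖e‖ = 1)
    (hκ : κ ∈ Ico (0 : ℝ) 1) {a β : ℝ} (ha : (1 + κ) / (1 - κ) ≤ a) (hβ : 0 < β)
    (hβρ : (1 + κ) / (1 - κ) * β < ρ / 2) {y : E} (hy : y ∈ Ω) (hyp : dist y p < ρ / 2)
    (hya : infDist y (frontier Ω) < a * β / 2) :
    ∃ x ∈ distLevel Ω β, dist x y ≤ (a + (1 + κ) / (1 - κ)) / 2 * β := by
  have hK : 0 ≤ (1 + κ) / (1 - κ) := div_nonneg (by linarith [hκ.1]) (by linarith [hκ.2])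
  rcases le_total β (infDist y (frontier Ω)) with hle | hle
  · obtain ⟨x, hx, hxy⟩ := exists_mem_distLevel_of_le_infDist hΩ ⟨p, hp⟩ hy hβ hle
    exact ⟨x, hx, by linarith [mul_nonneg hK hβ.le]⟩
  · obtain ⟨x, hx, hxy⟩ := h.exists_mem_distLevel_of_infDist_le hΩ hp he hκ hy hle hyp hβρ
    exact ⟨x, hx, by linarith [mul_le_mul_of_nonneg_right ha hβ.le]⟩

theorem inner_add_smul_self_of_inner_eq_zero {z : E} (he : ‖e‖ = 1) (hze : ⟪e, z⟫_ℝ = 0)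
    (t : ℝ) : ⟪e, z + t • e⟫_ℝ = t := by
  rw [inner_add_right, hze, inner_smul_right, real_inner_self_eq_norm_sq, he, one_pow, mul_one,
    zero_add]

theorem norm_add_smul_le_div {z : E} (he : ‖e‖ = 1) (hκ : κ < 1) {t : ℝ}
    (ht : |t| ≤ κ / (1 - κ) * ‖z‖) : ‖z + t • e‖ ≤ ‖z‖ / (1 - κ) := by
  have h1 : 1 - κ ≠ 0 := by linarith
  calc ‖z + t • e‖ ≤ ‖z‖ + |t| := by
        simpa [norm_smul, he] using norm_add_le z (t • e)
    _ ≤ ‖z‖ + κ / (1 - κ) * ‖z‖ := by gcongr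
    _ = ‖z‖ / (1 - κ) := by field_simp; ring

theorem InteriorConeAt.exists_add_mem_distLevel (h : InteriorConeAt Ω p e κ ρ) (hΩ : IsOpen Ω)
    (hp : p ∈ frontier Ω) (he : ‖e‖ = 1) (hκ : κ ∈ Ico (0 : ℝ) 1) {β r : ℝ} {x z : E}
    (hx : x ∈ distLevel Ω β) (hxp : dist x p < ρ / 4) (hrβ : r ≤ β) (hrρ : r ≤ ρ / 4)
    (hze : ⟪e, z⟫_ℝ = 0) (hz : ‖z‖ < (1 - κ) * r) :
    ∃ t : ℝ, x + (z + t • e) ∈ distLevel Ω β ∧ ‖z + t • e‖ < r := by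
  obtain ⟨hκ0, hκ1⟩ := hκ
  have h1 : 0 < 1 - κ := by linarith
  have hρ : 0 < ρ := by linarith [dist_nonneg (x := x) (y := p)]
  have hinner := inner_add_smul_self_of_inner_eq_zero he hze
  set T := κ / (1 - κ) * ‖z‖
  have hT : 0 ≤ T := by positivity
  have hnorm {t : ℝ} (ht : t ∈ Icc (-T) T) : ‖z + t • e‖ ≤ ‖z‖ / (1 - κ) :=
    norm_add_smul_le_div he hκ1 (abs_le.2 ht)
  have hzr : ‖z‖ / (1 - κ) < r := (div_lt_iff₀' h1).2 hz
  have hcone {t : ℝ} (ht : t ∈ Icc (-T) T) : κ * ‖z + t • e‖ ≤ T :=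
    (mul_le_mul_of_nonneg_left (hnorm ht) hκ0).trans_eq (mul_comm_div _ _ _).symm
  have hmem {t : ℝ} (ht : t ∈ Icc (-T) T) : x + (z + t • e) ∈ Ω := by
    refine ball_infDist_frontier_subset hΩ hx.1 ?_
    rw [mem_ball, dist_self_add_left, hx.2]
    linarith [hnorm ht]
  have hTT : T ∈ Icc (-T) T := ⟨by linarith, le_rfl⟩
  have hTT' : -T ∈ Icc (-T) T := ⟨le_rfl, by linarith⟩
  have hup : β ≤ infDist (x + (z + T • e)) (frontier Ω) :=
    hx.2.ge.trans <| h.infDist_le_infDist_add hΩ hp he hκ0 hx.1 (by linarith)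
      (by linarith [hnorm hTT]) (by rw [hinner]; exact hcone hTT)
  have hlow : infDist (x + (z + (-T) • e)) (frontier Ω) ≤ β := by
    have hdist := dist_triangle (x + (z + (-T) • e)) x p
    rw [dist_self_add_left] at hdist
    have hle := h.infDist_le_infDist_add hΩ hp he hκ0 (hmem hTT') (v := -(z + (-T) • e))
      (by linarith [hnorm hTT']) (by rw [norm_neg]; linarith [hnorm hTT'])
      (by rw [norm_neg, inner_neg_right, hinner, neg_neg]; exact hcone hTT')
    rwa [add_neg_cancel_right, hx.2] at hle
  have hcont : Continuous fun t : ℝ => infDist (x + (z + t • e)) (frontier Ω) :=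
    (continuous_infDist_pt _).comp (by fun_prop)
  obtain ⟨t, ht, hteq⟩ := intermediate_value_Icc (by linarith) hcont.continuousOn
    (show β ∈ Icc _ _ from ⟨hlow, hup⟩)
  exact ⟨t, ⟨hmem ht, hteq⟩, (hnorm ht).trans_lt hzr⟩

end InteriorCone

theorem exists_interiorConeAt_of_hasStrictFDerivAt {E : Type*} [NormedAddCommGroup E]
    [InnerProductSpace ℝ E] [CompleteSpace E] {Ω U : Set E} {p : E} {f : E → ℝ}
    {f' : E →L[ℝ] ℝ} (hf : HasStrictFDerivAt f f' p) (hf' : f' ≠ 0) (hU : U ∈ 𝓝 p)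
    (hΩU : Ω ∩ U = {x ∈ U | f x < 0}) {κ : ℝ} (hκ : 0 < κ) :
    ∃ e : E, ‖e‖ = 1 ∧ ∃ ρ > 0, InteriorConeAt Ω p e κ ρ := by
  set g := (InnerProductSpace.toDual ℝ E).symm f'
  have hg (v : E) : f' v = ⟪g, v⟫_ℝ := (InnerProductSpace.toDual_symm_apply).symm
  have hg0 : 0 < ‖g‖ := by
    rw [LinearIsometryEquiv.norm_map]
    exact norm_pos_iff.2 hf'
  obtain ⟨ρ₁, hρ₁, hlin⟩ := Metric.eventually_nhds_iff_ball.1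
    (hf.isLittleO.def (c := ‖g‖ * κ / 2) (by positivity))
  obtain ⟨ρ₂, hρ₂, hρU⟩ := Metric.mem_nhds_iff.1 hU
  refine ⟨-(‖g‖⁻¹ • g), ?_, min ρ₁ ρ₂ / 2, by positivity, fun z hz hzp v hv hve => ?_⟩
  · rw [norm_neg, norm_smul, norm_inv, norm_norm, inv_mul_cancel₀ hg0.ne']
  have hmin₁ := min_le_left ρ₁ ρ₂
  have hmin₂ := min_le_right ρ₁ ρ₂
  have hzvp : dist (z + v) p ≤ ‖v‖ + dist z p := by
    simpa only [dist_self_add_left] using dist_triangle (z + v) z p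
  have hzU : z ∈ U := hρU (mem_ball.2 (by linarith [dist_nonneg (x := z) (y := p)]))
  have hzvU : z + v ∈ U := hρU (mem_ball.2 (by linarith))
  have hfz : f z < 0 := (hΩU.subset ⟨hz, hzU⟩).2
  have hgv : ⟪g, v⟫_ℝ ≤ -(‖g‖ * κ * ‖v‖) := by
    rw [inner_neg_left, real_inner_smul_left] at hve
    have := mul_le_mul_of_nonneg_left hve hg0.le
    rw [mul_neg, mul_inv_cancel_left₀ hg0.ne'] at this
    linarith
  have hdiff : f (z + v) - f z - ⟪g, v⟫_ℝ ≤ ‖g‖ * κ / 2 * ‖v‖ := by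
    have := hlin (z + v, z) (by
      rw [mem_ball, Prod.dist_eq]
      exact max_lt (by linarith) (by linarith [norm_nonneg v]))
    simp only [add_sub_cancel_left, hg] at this
    exact (le_abs_self _).trans this
  have hfzv : f (z + v) < 0 := by
    have : 0 ≤ ‖g‖ * κ * ‖v‖ := by positivity
    linarith
  exact (hΩU.superset ⟨hzvU, hfzv⟩).1

theorem HasC2Boundary.hasInteriorCones {N : ℕ} {Ω : Set (EuclideanSpace ℝ (Fin N))}
    (h : HasC2Boundary Ω) {κ : ℝ} (hκ : 0 < κ) : HasInteriorCones Ω κ := by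
  intro p hp
  obtain ⟨U, f, hU, hpU, hf, hf', hΩU⟩ := h p hp
  exact exists_interiorConeAt_of_hasStrictFDerivAt
    ((hf.contDiffAt (hU.mem_nhds hpU)).hasStrictFDerivAt two_ne_zero) (hf' p hpU)
    (hU.mem_nhds hpU) hΩU hκ

section Hausdorff

open Module

theorem hausdorffMeasure_le_of_dist_le_mul {X Y : Type*} [MetricSpace X] [MeasurableSpace X]
    [BorelSpace X] [MetricSpace Y] [MeasurableSpace Y] [BorelSpace Y] {f : X → Y} {s : Set X}
    {K : NNReal} (h : ∀ x ∈ s, ∀ y ∈ s, dist x y ≤ K * dist (f x) (f y)) {d : ℝ} (hd : 0 ≤ d) :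
    μH[d] s ≤ (K : ENNReal) ^ d * μH[d] (f '' s) := by
  have hanti : AntilipschitzWith K (s.domRestrict f) :=
    AntilipschitzWith.of_le_mul_dist fun x y => h x x.2 y y.2
  have hle := hanti.le_hausdorffMeasure_image hd univ
  rwa [image_univ, range_domRestrict, ← isometry_subtype_coe.hausdorffMeasure_image (Or.inl hd),
    image_univ, Subtype.range_coe] at hle

/-- The `n`-dimensional Hausdorff measure of the unit ball of `ℝⁿ`, a positive multiple of its
volume. -/
noncomputable def unitBallHausdorff (n : ℕ) : ℝ :=
  (μH[(n : ℝ)] (ball (0 : EuclideanSpace ℝ (Fin n)) 1)).toReal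

theorem hausdorffMeasure_ball_euclideanSpace {n : ℕ} (y : EuclideanSpace ℝ (Fin n)) {r : ℝ}
    (hr : 0 < r) : μH[(n : ℝ)] (ball y r) = ENNReal.ofReal (unitBallHausdorff n * r ^ n) := by
  rw [Measure.addHaar_ball_of_pos _ _ hr, unitBallHausdorff, finrank_euclideanSpace_fin,
    ENNReal.ofReal_mul ENNReal.toReal_nonneg, ENNReal.ofReal_toReal measure_ball_lt_top.ne,
    mul_comm]

theorem unitBallHausdorff_pos (n : ℕ) : 0 < unitBallHausdorff n :=
  ENNReal.toReal_pos (measure_ball_pos _ _ one_pos).ne' measure_ball_lt_top.ne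

theorem hausdorffMeasure_ball {n : ℕ} {F : Type*} [NormedAddCommGroup F]
    [InnerProductSpace ℝ F] [FiniteDimensional ℝ F] [MeasurableSpace F] [BorelSpace F]
    (hF : finrank ℝ F = n) (y : F) {r : ℝ} (hr : 0 < r) :
    μH[(n : ℝ)] (ball y r) = ENNReal.ofReal (unitBallHausdorff n * r ^ n) := by
  subst hF
  set φ := (stdOrthonormalBasis ℝ F).repr.toIsometryEquiv
  rw [← hausdorffMeasure_ball_euclideanSpace (φ y) hr, ← φ.image_ball, φ.hausdorffMeasure_image]

variable {E : Type*} [NormedAddCommGroup E] [InnerProductSpace ℝ E]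
  [MeasurableSpace E] [BorelSpace E] {n : ℕ} [Fact (finrank ℝ E = n + 1)] {e : E} {S : Set E}

theorem hausdorffMeasure_ball_orthogonal_span_singleton (he : ‖e‖ = 1) (y : (ℝ ∙ e)ᗮ) {r : ℝ}
    (hr : 0 < r) : μH[(n : ℝ)] (ball y r) = ENNReal.ofReal (unitBallHausdorff n * r ^ n) :=
  have := FiniteDimensional.of_fact_finrank_eq_succ (K := ℝ) (V := E) n
  hausdorffMeasure_ball (Submodule.finrank_orthogonal_span_singleton
    (norm_ne_zero_iff.1 (he.trans_ne one_ne_zero))) y hr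

theorem hausdorffMeasure_inter_ball_le_of_transversal (he : ‖e‖ = 1) {κ : ℝ} (hκ : κ < 1)
    (hS : ∀ x ∈ S, ∀ y ∈ S, |⟪e, x - y⟫_ℝ| ≤ κ * ‖x - y‖) (y : E) {r : ℝ} (hr : 0 < r) :
    μH[(n : ℝ)] (S ∩ ball y r) ≤
      ENNReal.ofReal (((1 - κ)⁻¹ : ℝ) ^ n * unitBallHausdorff n * r ^ n) := by
  have h1 : 0 < (1 - κ)⁻¹ := inv_pos.2 (by linarith)
  set P := (ℝ ∙ e)ᗮ.orthogonalProjectionOnto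
  have hdist : ∀ x ∈ S ∩ ball y r, ∀ z ∈ S ∩ ball y r,
      dist x z ≤ (1 - κ)⁻¹.toNNReal * dist (P x) (P z) := by
    intro x hx z hz
    have hPnorm : ‖(ℝ ∙ e)ᗮ.starProjection (x - z)‖ = dist (P x) (P z) := by
      rw [dist_eq_norm, ← map_sub]
      rfl
    have hsplit : ‖x - z‖ ≤ |⟪e, x - z⟫_ℝ| + dist (P x) (P z) := by
      have := norm_add_le ((ℝ ∙ e).starProjection (x - z)) ((ℝ ∙ e)ᗮ.starProjection (x - z))
      rwa [Submodule.starProjection_add_starProjection_orthogonal,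
        Submodule.starProjection_unit_singleton ℝ he, norm_smul, he, mul_one, Real.norm_eq_abs,
        hPnorm] at this
    rw [Real.coe_toNNReal _ h1.le, inv_mul_eq_div, le_div_iff₀ (by linarith), dist_eq_norm]
    linarith [hS x hx.1 z hz.1]
  have himage : P '' (S ∩ ball y r) ⊆ ball (P y) r := by
    rintro _ ⟨x, hx, rfl⟩
    exact ((Submodule.lipschitzWith_orthogonalProjectionOnto _).dist_le_mul x y).trans_lt
      (by simpa using hx.2)
  calc μH[(n : ℝ)] (S ∩ ball y r)
      ≤ ((1 - κ)⁻¹.toNNReal : ENNReal) ^ (n : ℝ) * μH[(n : ℝ)] (P '' (S ∩ ball y r)) :=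
        hausdorffMeasure_le_of_dist_le_mul hdist n.cast_nonneg
    _ ≤ ENNReal.ofReal (1 - κ)⁻¹ ^ (n : ℝ) * μH[(n : ℝ)] (ball (P y) r) := by gcongr; rfl
    _ = _ := by
        rw [hausdorffMeasure_ball_orthogonal_span_singleton he _ hr, ENNReal.rpow_natCast,
          ← ENNReal.ofReal_pow h1.le, ← ENNReal.ofReal_mul (by positivity), mul_assoc]

theorem le_hausdorffMeasure_of_forall_exists_add_smul_mem (he : ‖e‖ = 1) {x : E} {r : ℝ}
    (hr : 0 < r) (hS : ∀ z : E, ⟪e, z⟫_ℝ = 0 → ‖z‖ < r → ∃ t : ℝ, x + (z + t • e) ∈ S) :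
    ENNReal.ofReal (unitBallHausdorff n * r ^ n) ≤ μH[(n : ℝ)] S := by
  set P := (ℝ ∙ e)ᗮ.orthogonalProjectionOnto
  have hPe : P e = 0 := Submodule.orthogonalProjectionOnto_orthogonalComplement_singleton_eq_zero e
  have hsub : ball (P x) r ⊆ P '' S := by
    intro w hw
    obtain ⟨t, ht⟩ := hS (w - P x : (ℝ ∙ e)ᗮ)
      (Submodule.mem_orthogonal_singleton_iff_inner_right.1 (w - P x).2) (mem_ball_iff_norm.1 hw)
    refine ⟨_, ht, ?_⟩
    rw [map_add, map_add, map_smul, hPe, smul_zero, add_zero,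
      Submodule.orthogonalProjectionOnto_mem_subspace_eq_self, add_sub_cancel]
  rw [← hausdorffMeasure_ball_orthogonal_span_singleton he (P x) hr]
  exact (measure_mono hsub).trans
    (hausdorffMeasure_orthogonalProjectionOnto_le _ _ S n.cast_nonneg)

end Hausdorff

/-- The upper half of Ahlfors `d`-regularity of `μ`, with constant `C`. -/
def IsUpperRegular {X : Type*} [PseudoMetricSpace X] [MeasurableSpace X] (μ : Measure X)
    (C d : ℝ) : Prop :=
  ∀ (y : X) (r : ℝ), 0 < r → μ (ball y r) ≤ ENNReal.ofReal (C * r ^ d)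

section LevelSets

open Module

variable {E : Type*} [NormedAddCommGroup E] [InnerProductSpace ℝ E] [MeasurableSpace E]
  [BorelSpace E] {n : ℕ} [Fact (finrank ℝ E = n + 1)] {Ω : Set E} {κ : ℝ}

theorem HasInteriorCones.exists_isUpperRegular_distLevel (h : HasInteriorCones Ω κ)
    (hκ : κ ∈ Ico (0 : ℝ) 1) (hΩ : IsOpen Ω) (hK : IsCompact (frontier Ω)) :
    ∃ C, ∃ η > 0, ∀ β ∈ Ioo 0 η,
      IsUpperRegular (μH[(n : ℝ)].restrict (distLevel Ω β)) C n := by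
  obtain ⟨ρ, hρ, hcone⟩ := h.exists_uniform hK
  obtain ⟨t, htK, htfin, hcover⟩ := hK.finite_cover_balls (show 0 < ρ / 8 by positivity)
  lift t to Finset E using htfin
  set M := (1 - κ)⁻¹ ^ n * unitBallHausdorff n
  refine ⟨t.card * M, ρ / 8, by positivity, fun β hβ y r hr => ?_⟩
  have hnear : distLevel Ω β ⊆ ⋃ p ∈ t, distLevel Ω β ∩ ball p (ρ / 4) := by
    intro x hx
    have hne : (frontier Ω).Nonempty := nonempty_iff_ne_empty.2 fun h0 =>
      hβ.1.ne (by simpa [h0] using hx.2)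
    obtain ⟨q, hq, hxq⟩ := (infDist_lt_iff hne).1 (hx.2.trans_lt hβ.2)
    obtain ⟨p, hp, hqp⟩ := mem_iUnion₂.1 (hcover hq)
    refine mem_iUnion₂.2 ⟨p, hp, hx, mem_ball.2 ?_⟩
    linarith [dist_triangle x q p, mem_ball.1 hqp]
  have hpatch : ∀ p ∈ t, μH[(n : ℝ)] (distLevel Ω β ∩ ball p (ρ / 4) ∩ ball y r) ≤
      ENNReal.ofReal (M * r ^ n) := by
    intro p hp
    obtain ⟨e, he, hpe⟩ := hcone p (htK hp)
    exact hausdorffMeasure_inter_ball_le_of_transversal he hκ.2 (fun x hx z hz =>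
      hpe.abs_inner_sub_le_of_mem_distLevel hΩ (htK hp) he hκ.1 hx.1 hz.1 hx.2 hz.2) y hr
  rw [Measure.restrict_apply measurableSet_ball, inter_comm]
  calc μH[(n : ℝ)] (distLevel Ω β ∩ ball y r)
      ≤ μH[(n : ℝ)] (⋃ p ∈ t, distLevel Ω β ∩ ball p (ρ / 4) ∩ ball y r) := by
        simp only [← iUnion₂_inter]
        gcongr
    _ ≤ ∑ p ∈ t, μH[(n : ℝ)] (distLevel Ω β ∩ ball p (ρ / 4) ∩ ball y r) :=
        measure_biUnion_finset_le _ _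
    _ ≤ t.card • ENNReal.ofReal (M * r ^ n) := Finset.sum_le_card_nsmul _ _ _ hpatch
    _ = ENNReal.ofReal (t.card * M * r ^ (n : ℝ)) := by
        rw [← ENNReal.ofReal_nsmul, nsmul_eq_mul, Real.rpow_natCast, mul_assoc (t.card : ℝ)]

theorem InteriorConeAt.le_hausdorffMeasure_distLevel_inter_ball {p e : E} {ρ : ℝ}
    (h : InteriorConeAt Ω p e κ ρ) (hΩ : IsOpen Ω) (hp : p ∈ frontier Ω) (he : ‖e‖ = 1)
    (hκ : κ ∈ Ico (0 : ℝ) 1) {β r : ℝ} {x : E} (hx : x ∈ distLevel Ω β) (hxp : dist x p < ρ / 4)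
    (hr : 0 < r) (hrβ : r ≤ β) (hrρ : r ≤ ρ / 4) :
    ENNReal.ofReal (unitBallHausdorff n * ((1 - κ) * r) ^ n) ≤
      μH[(n : ℝ)] (distLevel Ω β ∩ ball x r) := by
  refine le_hausdorffMeasure_of_forall_exists_add_smul_mem he (x := x)
    (mul_pos (by linarith [hκ.2]) hr) fun z hze hz => ?_
  obtain ⟨t, ht, htr⟩ := h.exists_add_mem_distLevel hΩ hp he hκ hx hxp hrβ hrρ hze hz
  exact ⟨t, ht, by rwa [mem_ball, dist_self_add_left]⟩

theorem HasInteriorCones.exists_le_hausdorffMeasure_distLevel_inter_ball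
    (h : HasInteriorCones Ω κ) (hκ : κ ∈ Ico (0 : ℝ) 1) (hΩ : IsOpen Ω)
    (hK : IsCompact (frontier Ω)) (hne : (frontier Ω).Nonempty) {a : ℝ}
    (ha : (1 + κ) / (1 - κ) < a) :
    ∃ m > 0, ∃ η > 0, ∀ β ∈ Ioo 0 η, ∀ y ∈ Ω, infDist y (frontier Ω) < a * β / 2 →
      ENNReal.ofReal (m * (a * β) ^ n) ≤ μH[(n : ℝ)] (distLevel Ω β ∩ ball y (a * β)) := by
  have := FiniteDimensional.of_fact_finrank_eq_succ (K := ℝ) (V := E) n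
  obtain ⟨ρ, hρ, hcone⟩ := h.exists_uniform hK
  have h1 : 0 < 1 - κ := by linarith [hκ.2]
  set K := (1 + κ) / (1 - κ)
  have ha1 : 1 < a := lt_of_le_of_lt ((one_le_div h1).2 (by linarith [hκ.1])) ha
  set θ := min 1 ((a - K) / 2)
  have hθ : 0 < θ := lt_min one_pos (by linarith)
  refine ⟨unitBallHausdorff n * ((1 - κ) * θ / a) ^ n,
    mul_pos (unitBallHausdorff_pos n) (by positivity), ρ / (8 * a), by positivity,
    fun β ⟨hβ, hβη⟩ y hy hya => ?_⟩
  have haβρ : a * β < ρ / 8 := by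
    rw [lt_div_iff₀ (by positivity)] at hβη
    linarith
  have hKβ : K * β ≤ a * β := by gcongr
  have hβa : β ≤ a * β := le_mul_of_one_le_left hβ.le ha1.le
  obtain ⟨q, hq, hyq⟩ := (infDist_lt_iff hne).1 hya
  obtain ⟨e, he, hqe⟩ := hcone q hq
  obtain ⟨x, hx, hxy⟩ : ∃ x ∈ distLevel Ω β, dist x y ≤ (a + K) / 2 * β :=
    hqe.exists_mem_distLevel_dist_le hΩ hq he hκ ha.le hβ (by linarith) hy (by linarith) hya
  have hθ₁ : θ * β ≤ β := mul_le_of_le_one_left hβ.le (min_le_left _ _)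
  have hθ₂ : θ * β ≤ (a - K) / 2 * β := by gcongr; exact min_le_right _ _
  calc ENNReal.ofReal (unitBallHausdorff n * ((1 - κ) * θ / a) ^ n * (a * β) ^ n)
      = ENNReal.ofReal (unitBallHausdorff n * ((1 - κ) * (θ * β)) ^ n) := by
        rw [mul_assoc, ← mul_pow]
        field_simp
    _ ≤ μH[(n : ℝ)] (distLevel Ω β ∩ ball x (θ * β)) :=
        hqe.le_hausdorffMeasure_distLevel_inter_ball hΩ hq he hκ hx
          (by linarith [dist_triangle x y q]) (by positivity) hθ₁ (by linarith)
    _ ≤ μH[(n : ℝ)] (distLevel Ω β ∩ ball y (a * β)) :=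
        measure_mono (inter_subset_inter_right _ (ball_subset_ball' (by linarith)))

end LevelSets

section Potential

variable {X : Type*} [MeasurableSpace X]

theorem sFinite_restrict_of_setLIntegral_ne_top {τ : Measure X} {Ω : Set X}
    (hΩ : MeasurableSet Ω) {Φ : X → ℝ} (hΦ : Measurable Φ) (hpos : ∀ x ∈ Ω, 0 < Φ x)
    (hfin : ∫⁻ x in Ω, ENNReal.ofReal (Φ x) ∂τ ≠ ⊤) : SFinite (τ.restrict Ω) := by
  have := isFiniteMeasure_withDensity hfin
  rw [← withDensity_inv_same (μ := τ.restrict Ω) hΦ.ennreal_ofReal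
    (ae_restrict_of_forall_mem hΩ fun x hx => (ENNReal.ofReal_pos.2 (hpos x hx)).ne')
    (ae_of_all _ fun _ => ENNReal.ofReal_ne_top)]
  infer_instance

variable [MetricSpace X] {μ : Measure X} {C d s : ℝ}

theorem IsUpperRegular.isLocallyFiniteMeasure (hμ : IsUpperRegular μ C d) :
    IsLocallyFiniteMeasure μ :=
  ⟨fun x => ⟨ball x 1, ball_mem_nhds x one_pos, (hμ x 1 one_pos).trans_lt ENNReal.ofReal_lt_top⟩⟩

theorem IsUpperRegular.ae_ne (hμ : IsUpperRegular μ C d) (hd : 0 < d) (y : X) :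
    ∀ᵐ x ∂μ, x ≠ y := by
  have hlim : Tendsto (fun r : ℝ => ENNReal.ofReal (C * r ^ d)) (𝓝[>] 0) (𝓝 0) := by
    have : Tendsto (fun r : ℝ => ENNReal.ofReal (C * r ^ d)) (𝓝 0) (𝓝 0) :=
      ((ENNReal.continuous_ofReal.comp
        (continuous_const.mul (Real.continuous_rpow_const hd.le))).tendsto' _ _
        (by simp [Real.zero_rpow hd.ne']))
    exact this.mono_left nhdsWithin_le_nhds
  have hle : μ {y} ≤ 0 := ge_of_tendsto hlim <| by
    filter_upwards [self_mem_nhdsWithin] with r hr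
    exact (measure_mono (singleton_subset_iff.2 (mem_ball_self hr))).trans (hμ y r hr)
  exact measure_eq_zero_iff_ae_notMem.1 (le_zero_iff.1 hle)

theorem exists_dyadic_near {R t : ℝ} (ht : 0 < t) (htR : t < R) :
    ∃ k : ℕ, R / 2 ^ (k + 1) ≤ t ∧ t < 4 * (R / 2 ^ (k + 1)) := by
  obtain ⟨k, hk, hk'⟩ := exists_nat_pow_near ((one_le_div ht).2 htR.le) one_lt_two
  refine ⟨k, (div_le_iff₀' (by positivity)).2 ((div_lt_iff₀ ht).1 hk').le, ?_⟩
  rw [le_div_iff₀' ht] at hk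
  rw [← mul_div_assoc, lt_div_iff₀ (by positivity), pow_succ]
  linarith

theorem hasSum_dyadic_rpow {R δ : ℝ} (hR : 0 ≤ R) (hδ : 0 < δ) :
    HasSum (fun k : ℕ => (R / 2 ^ (k + 1)) ^ δ) (R ^ δ / (2 ^ δ - 1)) := by
  have hq : 1 < (2 : ℝ) ^ δ := Real.one_lt_rpow one_lt_two hδ
  have hq' : (2 : ℝ) ^ δ - 1 ≠ 0 := by linarith
  have hterm (k : ℕ) : (R / 2 ^ (k + 1)) ^ δ = R ^ δ / 2 ^ δ * ((2 ^ δ)⁻¹) ^ k := by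
    rw [Real.div_rpow hR (by positivity), ← Real.rpow_pow_comm two_pos.le, pow_succ', inv_pow]
    field_simp
  have hval : R ^ δ / (2 ^ δ - 1) = R ^ δ / 2 ^ δ * (1 - (2 ^ δ)⁻¹)⁻¹ := by
    field_simp
  rw [hval]
  simp only [hterm]
  exact (hasSum_geometric_of_lt_one (by positivity) (inv_lt_one_of_one_lt₀ hq)).mul_left _

theorem IsUpperRegular.lintegral_ball_dist_rpow_neg_le [BorelSpace X]
    (hμ : IsUpperRegular μ C d) (hs : 0 ≤ s) (hsd : s < d) (y : X) {R : ℝ} (hR : 0 < R) :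
    ∫⁻ x in ball y R, ENNReal.ofReal (dist x y ^ (-s)) ∂μ ≤
      ENNReal.ofReal (C * 4 ^ d / (2 ^ (d - s) - 1) * R ^ (d - s)) := by
  set t : ℕ → ℝ := fun k => R / 2 ^ (k + 1)
  have ht (k : ℕ) : 0 < t k := by positivity
  set F : ℕ → X → ENNReal := fun k =>
    (ball y (4 * t k)).indicator fun _ => ENNReal.ofReal (t k ^ (-s))
  have hshell : ∀ᵐ x ∂μ.restrict (ball y R), ENNReal.ofReal (dist x y ^ (-s)) ≤ ∑' k, F k x := by
    filter_upwards [ae_restrict_mem measurableSet_ball,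
      ae_restrict_of_ae (hμ.ae_ne (hs.trans_lt hsd) y)] with x hx hxy
    obtain ⟨k, hk, hk'⟩ := exists_dyadic_near (dist_pos.2 hxy) hx
    have hFk : F k x = ENNReal.ofReal (t k ^ (-s)) := indicator_of_mem (mem_ball.2 hk') _
    refine le_trans ?_ (ENNReal.le_tsum k)
    rw [hFk]
    exact ENNReal.ofReal_le_ofReal (Real.rpow_le_rpow_of_nonpos (ht k) hk (neg_nonpos.2 hs))
  have hterm (k : ℕ) :
      ∫⁻ x, F k x ∂μ ≤ ENNReal.ofReal (C * 4 ^ d) * ENNReal.ofReal (t k ^ (d - s)) := by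
    rw [lintegral_indicator_const measurableSet_ball]
    calc ENNReal.ofReal (t k ^ (-s)) * μ (ball y (4 * t k))
        ≤ ENNReal.ofReal (t k ^ (-s)) * ENNReal.ofReal (C * (4 * t k) ^ d) := by
          gcongr
          exact hμ y _ (by linarith [ht k])
      _ = _ := by
          rw [← ENNReal.ofReal_mul (by positivity), ← ENNReal.ofReal_mul' (by positivity),
            Real.mul_rpow (by positivity) (ht k).le, sub_eq_neg_add, Real.rpow_add (ht k)]
          ring_nf
  have hsum := hasSum_dyadic_rpow hR.le (sub_pos.2 hsd)
  calc ∫⁻ x in ball y R, ENNReal.ofReal (dist x y ^ (-s)) ∂μ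
      ≤ ∫⁻ x in ball y R, ∑' k, F k x ∂μ := lintegral_mono_ae hshell
    _ ≤ ∫⁻ x, ∑' k, F k x ∂μ := setLIntegral_le_lintegral _ _
    _ = ∑' k, ∫⁻ x, F k x ∂μ :=
        lintegral_tsum fun _ => (measurable_const.indicator measurableSet_ball).aemeasurable
    _ ≤ ∑' k, ENNReal.ofReal (C * 4 ^ d) * ENNReal.ofReal (t k ^ (d - s)) :=
        ENNReal.tsum_le_tsum hterm
    _ = ENNReal.ofReal (C * 4 ^ d / (2 ^ (d - s) - 1) * R ^ (d - s)) := by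
        rw [ENNReal.tsum_mul_left, ← ENNReal.ofReal_tsum_of_nonneg
          (fun k => Real.rpow_nonneg (ht k).le _) hsum.summable, hsum.tsum_eq,
          ← ENNReal.ofReal_mul' (hsum.nonneg fun k => Real.rpow_nonneg (ht k).le _)]
        ring_nf

theorem le_lintegral_ball_dist_rpow_neg [OpensMeasurableSpace X] {y : X} (hy : ∀ᵐ x ∂μ, x ≠ y)
    (hs : 0 ≤ s) {m R : ℝ} (hR : 0 < R) (hm : ENNReal.ofReal (m * R ^ d) ≤ μ (ball y R)) :
    ENNReal.ofReal (m * R ^ (d - s)) ≤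
      ∫⁻ x in ball y R, ENNReal.ofReal (dist x y ^ (-s)) ∂μ := by
  calc ENNReal.ofReal (m * R ^ (d - s))
      = ENNReal.ofReal (R ^ (-s)) * ENNReal.ofReal (m * R ^ d) := by
        rw [← ENNReal.ofReal_mul (by positivity), sub_eq_neg_add, Real.rpow_add hR]
        ring_nf
    _ ≤ ENNReal.ofReal (R ^ (-s)) * μ (ball y R) := by gcongr
    _ = ∫⁻ _ in ball y R, ENNReal.ofReal (R ^ (-s)) ∂μ := (setLIntegral_const _ _).symm
    _ ≤ _ := by
        refine lintegral_mono_ae ?_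
        filter_upwards [ae_restrict_mem measurableSet_ball, ae_restrict_of_ae hy] with x hx hxy
        exact ENNReal.ofReal_le_ofReal
          (Real.rpow_le_rpow_of_nonpos (dist_pos.2 hxy) (mem_ball.1 hx).le (neg_nonpos.2 hs))

/-- The unnormalised integral `β I₁(β)`: the `Φ`-weighted total mass, with respect to a measure `μ`
(surface measure on `Σ_β`), of the potential of `τ` truncated to `|x - y| < R`. -/
noncomputable def truncatedPotential (μ τ : Measure X) (Ω : Set X) (Φ : X → ℝ) (G : X → X → ℝ)
    (R : ℝ) : ENNReal :=
  ∫⁻ x, ENNReal.ofReal (Φ x) * ∫⁻ y in {y ∈ Ω | dist x y < R}, ENNReal.ofReal (G x y) ∂τ ∂μ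

variable [SecondCountableTopology X] [BorelSpace X] {τ : Measure X} {Ω : Set X} {Φ : X → ℝ}
  {G : X → X → ℝ} {R c : ℝ}

theorem truncatedPotential_eq_lintegral_ball [SFinite μ] [SFinite (τ.restrict Ω)]
    (hΦ : Measurable Φ) (hG : Measurable (Function.uncurry G)) (hΦμ : ∀ᵐ x ∂μ, 0 ≤ Φ x) :
    truncatedPotential μ τ Ω Φ G R =
      ∫⁻ y in Ω, ∫⁻ x in ball y R, ENNReal.ofReal (Φ x * G x y) ∂μ ∂τ := by
  set F : X × X → ENNReal :=
    {q | dist q.1 q.2 < R}.indicator fun q => ENNReal.ofReal (Φ q.1 * G q.1 q.2)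
  have hF : Measurable F := Measurable.indicator
    ((hΦ.comp measurable_fst).mul hG).ennreal_ofReal
    (measurableSet_lt measurable_dist measurable_const)
  have hslice : ∀ᵐ x ∂μ, ENNReal.ofReal (Φ x) *
      ∫⁻ y in {y ∈ Ω | dist x y < R}, ENNReal.ofReal (G x y) ∂τ = ∫⁻ y in Ω, F (x, y) ∂τ := by
    filter_upwards [hΦμ] with x hx
    have hmeas : MeasurableSet {y | dist x y < R} :=
      measurableSet_lt (measurable_const.dist measurable_id) measurable_const
    rw [show {y ∈ Ω | dist x y < R} = {y | dist x y < R} ∩ Ω from inter_comm _ _,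
      ← Measure.restrict_restrict hmeas, ← lintegral_const_mul' _ _ ENNReal.ofReal_ne_top,
      ← lintegral_indicator hmeas]
    simp only [← ENNReal.ofReal_mul hx]
    rfl
  calc truncatedPotential μ τ Ω Φ G R
      = ∫⁻ x, ∫⁻ y in Ω, F (x, y) ∂τ ∂μ := lintegral_congr_ae hslice
    _ = ∫⁻ y in Ω, ∫⁻ x, F (x, y) ∂μ ∂τ := lintegral_lintegral_swap hF.aemeasurable
    _ = _ := lintegral_congr fun y => by
        rw [← lintegral_indicator measurableSet_ball]
        rfl

theorem truncatedPotential_le [SFinite (τ.restrict Ω)] (hμ : IsUpperRegular μ C d) (hs : 0 ≤ s)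
    (hsd : s < d) (hR : 0 < R) (hΩ : MeasurableSet Ω) (hΦ : Measurable Φ)
    (hG : Measurable (Function.uncurry G)) (hΦμ : ∀ᵐ x ∂μ, 0 ≤ Φ x) (hc : 0 ≤ c)
    (hle : ∀ y ∈ Ω, ∀ᵐ x ∂μ, x ≠ y → dist x y < R → Φ x * G x y ≤ c * dist x y ^ (-s) * Φ y) :
    truncatedPotential μ τ Ω Φ G R ≤
      ENNReal.ofReal (c * (C * 4 ^ d / (2 ^ (d - s) - 1) * R ^ (d - s))) *
        ∫⁻ y in Ω, ENNReal.ofReal (Φ y) ∂τ := by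
  have := hμ.isLocallyFiniteMeasure
  rw [truncatedPotential_eq_lintegral_ball hΦ hG hΦμ, ← lintegral_const_mul _ hΦ.ennreal_ofReal]
  refine setLIntegral_mono' hΩ fun y hy => ?_
  calc ∫⁻ x in ball y R, ENNReal.ofReal (Φ x * G x y) ∂μ
      ≤ ∫⁻ x in ball y R, ENNReal.ofReal c * ENNReal.ofReal (dist x y ^ (-s)) *
          ENNReal.ofReal (Φ y) ∂μ := by
        refine lintegral_mono_ae ?_
        filter_upwards [ae_restrict_mem measurableSet_ball, ae_restrict_of_ae (hle y hy),
          ae_restrict_of_ae (hμ.ae_ne (hs.trans_lt hsd) y)] with x hx hxle hxy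
        rw [← ENNReal.ofReal_mul hc, ← ENNReal.ofReal_mul (by positivity)]
        exact ENNReal.ofReal_le_ofReal (hxle hxy hx)
    _ = ENNReal.ofReal c * (∫⁻ x in ball y R, ENNReal.ofReal (dist x y ^ (-s)) ∂μ) *
          ENNReal.ofReal (Φ y) := by
        rw [lintegral_mul_const' _ _ ENNReal.ofReal_ne_top,
          lintegral_const_mul' _ _ ENNReal.ofReal_ne_top]
    _ ≤ _ := by
        rw [ENNReal.ofReal_mul hc]
        gcongr
        exact hμ.lintegral_ball_dist_rpow_neg_le hs hsd y hR

theorem le_truncatedPotential [SFinite μ] [SFinite (τ.restrict Ω)] (hs : 0 ≤ s) (hR : 0 < R)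
    (hΦ : Measurable Φ) (hG : Measurable (Function.uncurry G)) (hΦμ : ∀ᵐ x ∂μ, 0 ≤ Φ x)
    (hc : 0 ≤ c) {m : ℝ} {A : Set X} (hA : MeasurableSet A) (hAΩ : A ⊆ Ω)
    (hm : ∀ y ∈ A, ENNReal.ofReal (m * R ^ d) ≤ μ (ball y R)) (hμ : ∀ y, ∀ᵐ x ∂μ, x ≠ y)
    (hle : ∀ y ∈ A, ∀ᵐ x ∂μ, x ≠ y → dist x y < R → c * dist x y ^ (-s) * Φ y ≤ Φ x * G x y) :
    ENNReal.ofReal (c * (m * R ^ (d - s))) * ∫⁻ y in A, ENNReal.ofReal (Φ y) ∂τ ≤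
      truncatedPotential μ τ Ω Φ G R := by
  rw [truncatedPotential_eq_lintegral_ball hΦ hG hΦμ, ← lintegral_const_mul _ hΦ.ennreal_ofReal]
  refine le_trans (setLIntegral_mono' hA fun y hy => ?_) (lintegral_mono_set hAΩ)
  calc ENNReal.ofReal (c * (m * R ^ (d - s))) * ENNReal.ofReal (Φ y)
      ≤ ENNReal.ofReal c * (∫⁻ x in ball y R, ENNReal.ofReal (dist x y ^ (-s)) ∂μ) *
          ENNReal.ofReal (Φ y) := by
        rw [ENNReal.ofReal_mul hc]
        gcongr
        exact le_lintegral_ball_dist_rpow_neg (hμ y) hs hR (hm y hy)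
    _ = ∫⁻ x in ball y R, ENNReal.ofReal c * ENNReal.ofReal (dist x y ^ (-s)) *
          ENNReal.ofReal (Φ y) ∂μ := by
        rw [lintegral_mul_const' _ _ ENNReal.ofReal_ne_top,
          lintegral_const_mul' _ _ ENNReal.ofReal_ne_top]
    _ ≤ _ := by
        refine lintegral_mono_ae ?_
        filter_upwards [ae_restrict_mem measurableSet_ball, ae_restrict_of_ae (hle y hy),
          ae_restrict_of_ae (hμ y)] with x hx hxle hxy
        rw [← ENNReal.ofReal_mul hc, ← ENNReal.ofReal_mul (by positivity)]
        exact ENNReal.ofReal_le_ofReal (hxle hxy hx)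

theorem ofReal_rpow_sub_mul_ofReal_mul_rpow {a β : ℝ} (ha : 0 ≤ a) (hβ : 0 < β) (M s d : ℝ) :
    ENNReal.ofReal (β ^ (s - d)) * ENNReal.ofReal (M * (a * β) ^ (d - s)) =
      ENNReal.ofReal (M * a ^ (d - s)) := by
  rw [← ENNReal.ofReal_mul (by positivity), Real.mul_rpow ha hβ.le, ← neg_sub d s,
    Real.rpow_neg hβ.le]
  field_simp

theorem IsUpperRegular.ofReal_rpow_mul_truncatedPotential_mem_Icc [SFinite (τ.restrict Ω)]
    (hμ : IsUpperRegular μ C d) (hs : 0 ≤ s) (hsd : s < d) {a β : ℝ} (ha : 0 < a) (hβ : 0 < β)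
    (hΩ : MeasurableSet Ω) (hΦ : Measurable Φ) (hG : Measurable (Function.uncurry G))
    (hΦμ : ∀ᵐ x ∂μ, 0 ≤ Φ x) (hc : 0 ≤ c) {m : ℝ} {A : Set X} (hA : MeasurableSet A)
    (hAΩ : A ⊆ Ω) (hm : ∀ y ∈ A, ENNReal.ofReal (m * (a * β) ^ d) ≤ μ (ball y (a * β)))
    (hGreen : ∀ y ∈ Ω, ∀ᵐ x ∂μ, x ≠ y → dist x y < a * β →
      c⁻¹ * dist x y ^ (-s) * Φ y ≤ Φ x * G x y ∧ Φ x * G x y ≤ c * dist x y ^ (-s) * Φ y) :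
    ENNReal.ofReal (β ^ (s - d)) * truncatedPotential μ τ Ω Φ G (a * β) ∈
      Icc (ENNReal.ofReal (c⁻¹ * m * a ^ (d - s)) * ∫⁻ y in A, ENNReal.ofReal (Φ y) ∂τ)
        (ENNReal.ofReal (c * (C * 4 ^ d / (2 ^ (d - s) - 1)) * a ^ (d - s)) *
          ∫⁻ y in Ω, ENNReal.ofReal (Φ y) ∂τ) := by
  have := hμ.isLocallyFiniteMeasure
  have hR : 0 < a * β := by positivity
  have hlower := le_truncatedPotential (τ := τ) hs hR hΦ hG hΦμ (inv_nonneg.2 hc) hA hAΩ hm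
    (hμ.ae_ne (hs.trans_lt hsd)) fun y hy => (hGreen y (hAΩ hy)).mono
      fun x h hxy hlt => (h hxy hlt).1
  have hupper := truncatedPotential_le (τ := τ) hμ hs hsd hR hΩ hΦ hG hΦμ hc fun y hy =>
    (hGreen y hy).mono fun x h hxy hlt => (h hxy hlt).2
  rw [mem_Icc, ← ofReal_rpow_sub_mul_ofReal_mul_rpow ha.le hβ (c⁻¹ * m),
    ← ofReal_rpow_sub_mul_ofReal_mul_rpow ha.le hβ (c * _)]
  simp only [mul_assoc] at hlower hupper ⊢
  constructor <;> gcongr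

end Potential

theorem stmt8_general {n : ℕ} {E : Type*} [NormedAddCommGroup E] [InnerProductSpace ℝ E]
    [Fact (Module.finrank ℝ E = n + 1)] [MeasurableSpace E] [BorelSpace E]
    {Ω : Set E} (hΩ : IsOpen Ω) (hΩ_ne : Ω ≠ univ) (hK : IsCompact (frontier Ω))
    {κ : ℝ} (hκ : κ ∈ Ico (0 : ℝ) 1) (hcone : HasInteriorCones Ω κ)
    {a : ℝ} (ha : (1 + κ) / (1 - κ) < a) {s : ℝ} (hs : 0 ≤ s) (hsn : s < n)
    {Φ : E → ℝ} {G : E → E → ℝ} (hΦ : Measurable Φ) (hΦ_pos : ∀ x ∈ Ω, 0 < Φ x)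
    (hG : Measurable (Function.uncurry G)) {c₀ β₁ : ℝ} (hc₀ : 0 < c₀) (hβ₁ : 0 < β₁)
    (hGreen : ∀ β ∈ Ioo 0 β₁, ∀ x ∈ distLevel Ω β, ∀ y ∈ Ω, 0 < dist x y → dist x y < a * β →
      c₀⁻¹ * dist x y ^ (-s) * Φ y ≤ Φ x * G x y ∧ Φ x * G x y ≤ c₀ * dist x y ^ (-s) * Φ y) :
    ∃ c : ℝ, 1 ≤ c ∧ ∃ β₂ : ℝ, 0 < β₂ ∧ β₂ ≤ β₁ ∧ ∀ τ : Measure E,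
      ∫⁻ x in Ω, ENNReal.ofReal (Φ x) ∂τ < ⊤ → ∀ β ∈ Ioo 0 β₂,
        ENNReal.ofReal c⁻¹ * ∫⁻ y in {y ∈ Ω | infDist y (frontier Ω) < a * β / 2},
            ENNReal.ofReal (Φ y) ∂τ ≤
          ENNReal.ofReal (β ^ (s - n)) *
            truncatedPotential (μH[(n : ℝ)].restrict (distLevel Ω β)) τ Ω Φ G (a * β) ∧
        ENNReal.ofReal (β ^ (s - n)) *
            truncatedPotential (μH[(n : ℝ)].restrict (distLevel Ω β)) τ Ω Φ G (a * β) ≤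
          ENNReal.ofReal c * ∫⁻ y in Ω, ENNReal.ofReal (Φ y) ∂τ := by
  rcases Ω.eq_empty_or_nonempty with rfl | hne
  · exact ⟨1, le_rfl, β₁, hβ₁, le_rfl, by simp [truncatedPotential, distLevel]⟩
  have := FiniteDimensional.of_fact_finrank_eq_succ (K := ℝ) (V := E) n
  have ha0 : 0 < a := lt_of_le_of_lt (div_nonneg (by linarith [hκ.1]) (by linarith [hκ.2])) ha
  obtain ⟨C, η, hη, hupper⟩ := hcone.exists_isUpperRegular_distLevel (n := n) hκ hΩ hK
  obtain ⟨m, hm, η', hη', hlower⟩ := hcone.exists_le_hausdorffMeasure_distLevel_inter_ball (n := n)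
    hκ hΩ hK (nonempty_frontier_iff.2 ⟨hne, hΩ_ne⟩) ha
  set u := c₀ * (C * 4 ^ (n : ℝ) / (2 ^ (n - s) - 1)) * a ^ (n - s)
  set l := c₀⁻¹ * m * a ^ (n - s)
  have hl : 0 < l := by positivity
  refine ⟨max 1 (max u l⁻¹), le_max_left _ _, min β₁ (min η η'), by positivity, min_le_left _ _,
    fun τ hτ β ⟨hβ, hβ₂⟩ => ?_⟩
  obtain ⟨hββ₁, hβη, hβη'⟩ : β < β₁ ∧ β < η ∧ β < η' := by simpa using hβ₂
  set μ := μH[(n : ℝ)].restrict (distLevel Ω β)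
  have hμ : IsUpperRegular μ C n := hupper β ⟨hβ, hβη⟩
  have := sFinite_restrict_of_setLIntegral_ne_top hΩ.measurableSet hΦ hΦ_pos hτ.ne
  have hstrip : MeasurableSet {y ∈ Ω | infDist y (frontier Ω) < a * β / 2} :=
    hΩ.measurableSet.inter (measurableSet_lt measurable_infDist measurable_const)
  have hball : ∀ y ∈ {y ∈ Ω | infDist y (frontier Ω) < a * β / 2},
      ENNReal.ofReal (m * (a * β) ^ (n : ℝ)) ≤ μ (ball y (a * β)) := fun y hy => by
    rw [Real.rpow_natCast, Measure.restrict_apply measurableSet_ball, inter_comm]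
    exact hlower β ⟨hβ, hβη'⟩ y hy.1 hy.2
  have hlevel {P : E → Prop} (hP : ∀ x ∈ distLevel Ω β, P x) : ∀ᵐ x ∂μ, P x :=
    ae_restrict_of_forall_mem (measurableSet_distLevel hΩ β) hP
  obtain ⟨hlo, hup⟩ := hμ.ofReal_rpow_mul_truncatedPotential_mem_Icc (τ := τ) hs hsn ha0 hβ
    hΩ.measurableSet hΦ hG (hlevel fun x hx => (hΦ_pos x hx.1).le) hc₀.le hstrip (sep_subset _ _)
    hball fun y hy => hlevel fun x hx hxy => hGreen β ⟨hβ, hββ₁⟩ x hx y hy (dist_pos.2 hxy)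
  refine ⟨le_trans ?_ hlo, hup.trans ?_⟩
  · gcongr
    exact inv_le_of_inv_le₀ hl (by simp [l])
  · gcongr
    simp [u]

theorem stmt8 {N : ℕ} (hN : 3 ≤ N) (Ω : Set (EuclideanSpace ℝ (Fin N)))
    (hΩo : IsOpen Ω) (hΩb : Bornology.IsBounded Ω) (hΩ2 : HasC2Boundary Ω)
    (a : ℝ) (ha : 2 ≤ a)
    (Φ : EuclideanSpace ℝ (Fin N) → ℝ)
    (G : EuclideanSpace ℝ (Fin N) → EuclideanSpace ℝ (Fin N) → ℝ)
    (hΦm : Measurable Φ) (hΦpos : ∀ x ∈ Ω, 0 < Φ x)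
    (hGm : Measurable (Function.uncurry G))
    (hGpos : ∀ x ∈ Ω, ∀ y ∈ Ω, x ≠ y → 0 < G x y)
    (c₀ β₁ : ℝ) (hc₀ : 1 ≤ c₀) (hβ₁ : 0 < β₁)
    -- two-sided estimate of `Φ(x) G(x,y)` for `x ∈ Σ_β`, `0 < |x-y| < aβ`
    (hG : ∀ β ∈ Set.Ioo (0:ℝ) β₁, ∀ x ∈ Ω, Metric.infDist x (frontier Ω) = β →
      ∀ y ∈ Ω, 0 < dist x y → dist x y < a * β →
        c₀⁻¹ * dist x y ^ ((2:ℝ) - N) * Φ y ≤ Φ x * G x y ∧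
        Φ x * G x y ≤ c₀ * dist x y ^ ((2:ℝ) - N) * Φ y) :
    ∃ c : ℝ, 1 ≤ c ∧ ∃ β₂ : ℝ, 0 < β₂ ∧ β₂ ≤ β₁ ∧
      ∀ τ : Measure (EuclideanSpace ℝ (Fin N)), τ Ωᶜ = 0 →
        (∫⁻ x in Ω, ENNReal.ofReal (Φ x) ∂τ) < ⊤ →
        ∀ β ∈ Set.Ioo (0:ℝ) β₂,
          ENNReal.ofReal c⁻¹ *
              (∫⁻ y in {y ∈ Ω | Metric.infDist y (frontier Ω) < a * β / 2},
                ENNReal.ofReal (Φ y) ∂τ) ≤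
            ENNReal.ofReal β⁻¹ *
              (∫⁻ x in {x ∈ Ω | Metric.infDist x (frontier Ω) = β},
                ENNReal.ofReal (Φ x) *
                  (∫⁻ y in {y ∈ Ω | dist x y < a * β},
                    ENNReal.ofReal (G x y) ∂τ) ∂(μH[(N:ℝ) - 1])) ∧
          ENNReal.ofReal β⁻¹ *
              (∫⁻ x in {x ∈ Ω | Metric.infDist x (frontier Ω) = β},
                ENNReal.ofReal (Φ x) *
                  (∫⁻ y in {y ∈ Ω | dist x y < a * β},
                    ENNReal.ofReal (G x y) ∂τ) ∂(μH[(N:ℝ) - 1])) ≤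
            ENNReal.ofReal c * (∫⁻ y in Ω, ENNReal.ofReal (Φ y) ∂τ) := by
  obtain ⟨n, rfl⟩ : ∃ n, N = n + 1 := ⟨N - 1, by omega⟩
  have : Fact (Module.finrank ℝ (EuclideanSpace ℝ (Fin (n + 1))) = n + 1) :=
    ⟨finrank_euclideanSpace_fin⟩
  have hn : (2 : ℝ) ≤ n := by exact_mod_cast Nat.le_of_succ_le_succ hN
  have hdim : ((n + 1 : ℕ) : ℝ) - 1 = n := by push_cast; ring
  have hexp : (2 : ℝ) - (n + 1 : ℕ) = -((n : ℝ) - 1) := by push_cast; ring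
  have hscale : (n : ℝ) - 1 - n = -1 := by ring
  have hΩ_ne : Ω ≠ univ := fun h => NormedSpace.unbounded_univ ℝ _ (h ▸ hΩb)
  have hK : IsCompact (frontier Ω) := isCompact_of_isClosed_isBounded isClosed_frontier
    (hΩb.closure.subset frontier_subset_closure)
  have hcone : HasInteriorCones Ω (1 / 4) := hΩ2.hasInteriorCones (by norm_num)
  simp only [hexp] at hG
  obtain ⟨c, hc, β₂, hβ₂, hβ₂₁, hbounds⟩ := stmt8_general (n := n) hΩo hΩ_ne hK
    (by constructor <;> norm_num) hcone (a := a) (by norm_num; linarith) (by linarith)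
    (by linarith) hΦm hΦpos hGm (by linarith) hβ₁ fun β hβ x hx => hG β hβ x hx.1 hx.2
  simp only [hscale, Real.rpow_neg_one] at hbounds
  rw [hdim]
  exact ⟨c, hc, β₂, hβ₂, hβ₂₁, fun τ _ => hbounds τ⟩
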